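/- (Proposition A.1: local Aleksandrov reflection principle.) Let d ≥ 1, 0 < m < 1, R₀ > 0 and λ > 2. Let u solve the homogeneous Dirichlet problem for the FDE ∂ₜu = Δ(u^m) on the ball B_{λR₀}(x₀) with nonnegative initial data u₀ supported in the closure of B_{R₀}(x₀) and extinction time T. Then for every t ∈ (0,T) and every x₂ ∈ B_{λR₀}(x₀) \ B_{2R₀}(x₀): u(t, x₀) ≥ u(t, x₂). Consequently, for every t ∈ (0,T): u(t, x₀) ≥ |A|^{−1} ∫_A u(t,x) dx, where A = B_{λR₀}(x₀) \ B_{2R₀}(x₀). -/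

import Mathlib

open MeasureTheory Metric Set Real

/-- The spatial Laplacian of `f : ℝ^d → ℝ` at a point, as the sum of second
coordinate derivatives. -/
noncomputable def spaceLap {d : ℕ} (f : EuclideanSpace ℝ (Fin d) → ℝ)
    (x : EuclideanSpace ℝ (Fin d)) : ℝ :=
  ∑ i : Fin d, fderiv ℝ (fun y => fderiv ℝ f y (EuclideanSpace.single i 1)) x
    (EuclideanSpace.single i 1)

/-- `u` is a classical solution of the fast diffusion equation `∂ₜ u = Δ(u^m)`
on the space-time set `Q`: it is positive and smooth on `Q` and satisfies the
equation pointwise on `Q`. -/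
def IsFDESol {d : ℕ} (m : ℝ) (Q : Set (ℝ × EuclideanSpace ℝ (Fin d)))
    (u : ℝ → EuclideanSpace ℝ (Fin d) → ℝ) : Prop :=
  (∀ p ∈ Q, 0 < u p.1 p.2) ∧
  ContDiffOn ℝ (⊤ : ℕ∞) (fun p : ℝ × EuclideanSpace ℝ (Fin d) => u p.1 p.2) Q ∧
  ∀ p ∈ Q, deriv (fun s => u s p.2) p.1 = spaceLap (fun y => u p.1 y ^ m) p.2

/-- `u` solves the homogeneous Dirichlet problem for the FDE `∂ₜ u = Δ(u^m)` on the
ball `B_ρ(x₀)` with initial data `u₀` and extinction time `T`. -/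
def IsDirichletSol {d : ℕ} (m : ℝ) (x₀ : EuclideanSpace ℝ (Fin d)) (ρ T : ℝ)
    (u : ℝ → EuclideanSpace ℝ (Fin d) → ℝ) (u₀ : EuclideanSpace ℝ (Fin d) → ℝ) : Prop :=
  (∀ t ∈ Icc 0 T, ∀ x ∈ closedBall x₀ ρ, 0 ≤ u t x) ∧
  ContinuousOn (fun p : ℝ × EuclideanSpace ℝ (Fin d) => u p.1 p.2)
    (Icc 0 T ×ˢ closedBall x₀ ρ) ∧
  IsFDESol m (Ioo 0 T ×ˢ ball x₀ ρ) u ∧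
  (∀ x ∈ ball x₀ ρ, u 0 x = u₀ x) ∧
  (∀ t ∈ Ioc 0 T, ∀ x ∈ sphere x₀ ρ, u t x = 0) ∧
  (∀ x ∈ closedBall x₀ ρ, u T x = 0) ∧
  ∀ t ∈ Ioo 0 T, ∃ x ∈ ball x₀ ρ, u t x ≠ 0


open scoped ContDiff Topology

namespace AR

/-- directional derivative -/
noncomputable def dd {V : Type*} [NormedAddCommGroup V] [NormedSpace ℝ V] (v : V) (F : V → ℝ)
    (p : V) : ℝ := fderiv ℝ F p v

section gen
variable {V : Type*} [NormedAddCommGroup V] [NormedSpace ℝ V]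

lemma dd_mul {F G : V → ℝ} {p : V} (v : V) (hF : DifferentiableAt ℝ F p)
    (hG : DifferentiableAt ℝ G p) :
    dd v (fun q => F q * G q) p = dd v F p * G p + F p * dd v G p := by
  unfold dd
  rw [fderiv_fun_mul hF hG]
  simp
  ring

lemma dd_sub {F G : V → ℝ} {p : V} (v : V) (hF : DifferentiableAt ℝ F p)
    (hG : DifferentiableAt ℝ G p) :
    dd v (fun q => F q - G q) p = dd v F p - dd v G p := by
  unfold dd
  rw [fderiv_fun_sub hF hG]
  simp

lemma dd_comp {F : V → ℝ} {g : ℝ → ℝ} {g' : ℝ} {p : V} (v : V) (hg : HasDerivAt g g' (F p))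
    (hF : DifferentiableAt ℝ F p) :
    dd v (fun q => g (F q)) p = g' * dd v F p := by
  unfold dd
  have := (hg.comp_hasFDerivAt p hF.hasFDerivAt).fderiv
  have h2 : (fun q => g (F q)) = g ∘ F := rfl
  rw [h2, this]
  simp

lemma dd_congr {F G : V → ℝ} {p : V} (v : V) (h : F =ᶠ[𝓝 p] G) : dd v F p = dd v G p := by
  unfold dd
  rw [h.fderiv_eq]

lemma dd_zero {F : V → ℝ} {p : V} (v : V) (h : ∀ᶠ q in 𝓝 p, F q = 0) : dd v F p = 0 := by
  rw [dd_congr v (G := fun _ => 0) h]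
  simp [dd]

lemma dd_smooth {F : V → ℝ} {Q : Set V} (hQ : IsOpen Q) (v : V) (hF : ContDiffOn ℝ ∞ F Q) :
    ContDiffOn ℝ ∞ (dd v F) Q := by
  have h := hF.fderiv_of_isOpen hQ (m := ∞) (by simp)
  exact h.clm_apply contDiffOn_const

lemma da {F : V → ℝ} {Q : Set V} (hQ : IsOpen Q) (hF : ContDiffOn ℝ ∞ F Q) {p : V} (hp : p ∈ Q) :
    DifferentiableAt ℝ F p :=
  (hF.contDiffAt (hQ.mem_nhds hp)).differentiableAt (by simp)

lemma glob {F : V → ℝ} {Q K : Set V} {n : WithTop ℕ∞} (hQ : IsOpen Q) (hK : IsClosed K)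
    (hKQ : K ⊆ Q) (hF : ContDiffOn ℝ n F Q) (h0 : ∀ p, p ∉ K → F p = 0) : ContDiff ℝ n F := by
  rw [contDiff_iff_contDiffAt]
  intro p
  by_cases hp : p ∈ K
  · exact hF.contDiffAt (hQ.mem_nhds (hKQ hp))
  · have : F =ᶠ[𝓝 p] fun _ => 0 := by
      filter_upwards [hK.isOpen_compl.mem_nhds hp] with q hq using h0 q hq
    exact (contDiffAt_const (c := (0:ℝ))).congr_of_eventuallyEq this

lemma dd_off {F : V → ℝ} {K : Set V} (hK : IsClosed K) (v : V) (h0 : ∀ p, p ∉ K → F p = 0) :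
    ∀ p, p ∉ K → dd v F p = 0 := by
  intro p hp
  apply dd_zero
  filter_upwards [hK.isOpen_compl.mem_nhds hp] with q hq using h0 q hq

variable [MeasurableSpace V] [BorelSpace V]
  {μ : Measure V} [μ.IsAddHaarMeasure]

lemma intg {F : V → ℝ} {Q K : Set V} (hQ : IsOpen Q) (hK : IsCompact K)
    (hKQ : K ⊆ Q) (hF : ContinuousOn F Q) (h0 : ∀ p, p ∉ K → F p = 0) : Integrable F μ := by
  have h1 : Continuous F := contDiff_zero.1 (glob (n := 0) hQ hK.isClosed hKQ (contDiffOn_zero.2 hF) h0)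
  exact h1.integrable_of_hasCompactSupport (HasCompactSupport.intro hK h0)

lemma div0 [FiniteDimensional ℝ V] {F : V → ℝ} {Q K : Set V} (hQ : IsOpen Q) (hK : IsCompact K)
    (hKQ : K ⊆ Q) (hF : ContDiffOn ℝ ∞ F Q) (h0 : ∀ p, p ∉ K → F p = 0) (v : V) :
    Integrable (dd v F) μ ∧ ∫ p, dd v F p ∂μ = 0 := by
  have h1 := glob hQ hK.isClosed hKQ hF h0
  have h2 : Integrable (dd v F) μ :=
    intg hQ hK hKQ (dd_smooth hQ v hF).continuousOn (dd_off hK.isClosed v h0)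
  refine ⟨h2, ?_⟩
  have := integral_mul_fderiv_eq_neg_fderiv_mul_of_integrable (μ := μ) (f := fun _ : V => (1:ℝ))
    (g := F) (v := v) (by simp) (by simp only [one_mul]; exact h2)
    (by simpa using intg (μ := μ) hQ hK hKQ hF.continuousOn h0)
    (fun x _ => by fun_prop) (fun x _ => (h1.differentiable (by simp)) x)
  simpa [dd] using this

end gen

/-- regularised positive part -/
noncomputable def J (a r : ℝ) : ℝ := (r + √(r ^ 2 + a ^ 2)) / 2
noncomputable def et (a r : ℝ) : ℝ := (1 + r / √(r ^ 2 + a ^ 2)) / 2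

lemma sq_pos' {a : ℝ} (ha : 0 < a) (r : ℝ) : 0 < r ^ 2 + a ^ 2 := by positivity

lemma J_smooth {a : ℝ} (ha : 0 < a) : ContDiff ℝ ∞ (J a) := by
  unfold J
  have : ContDiff ℝ ∞ (fun r : ℝ => √(r ^ 2 + a ^ 2)) :=
    ContDiff.sqrt (by fun_prop) (fun r => (sq_pos' ha r).ne')
  exact (contDiff_id.add this).div_const 2

lemma et_smooth {a : ℝ} (ha : 0 < a) : ContDiff ℝ ∞ (et a) := by
  unfold et
  have : ContDiff ℝ ∞ (fun r : ℝ => √(r ^ 2 + a ^ 2)) :=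
    ContDiff.sqrt (by fun_prop) (fun r => (sq_pos' ha r).ne')
  exact (contDiff_const.add (contDiff_id.div this
    (fun r => (Real.sqrt_pos.2 (sq_pos' ha r)).ne'))).div_const 2

lemma J_deriv {a : ℝ} (ha : 0 < a) (r : ℝ) : HasDerivAt (J a) (et a r) r := by
  have h1 : HasDerivAt (fun r : ℝ => r ^ 2 + a ^ 2) (2 * r) r := by
    simpa using (hasDerivAt_pow 2 r).add_const (a ^ 2)
  have h2 := h1.sqrt (sq_pos' ha r).ne'
  have h3 := ((hasDerivAt_id r).add h2).div_const 2
  have hs := (Real.sqrt_pos.2 (sq_pos' ha r)).ne'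
  have h4 : HasDerivAt (J a) _ r := h3
  refine h4.congr_deriv ?_
  unfold et
  field_simp

lemma et_deriv {a : ℝ} (ha : 0 < a) (r : ℝ) : ∃ e', 0 ≤ e' ∧ HasDerivAt (et a) e' r := by
  have h1 : HasDerivAt (fun r : ℝ => r ^ 2 + a ^ 2) (2 * r) r := by
    simpa using (hasDerivAt_pow 2 r).add_const (a ^ 2)
  have h2 := h1.sqrt (sq_pos' ha r).ne'
  have hs := (Real.sqrt_pos.2 (sq_pos' ha r))
  have h3 := (((hasDerivAt_id r).div h2 hs.ne').const_add 1).div_const 2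
  refine ⟨_, ?_, h3⟩
  have h4 : √(r ^ 2 + a ^ 2) ^ 2 = r ^ 2 + a ^ 2 := Real.sq_sqrt (sq_pos' ha r).le
  have : (1 * √(r ^ 2 + a ^ 2) - id r * (2 * r / (2 * √(r ^ 2 + a ^ 2)))) =
      a ^ 2 / √(r ^ 2 + a ^ 2) := by
    simp only [id]
    field_simp
    rw [h4]; ring
  rw [this]
  positivity

lemma J_nonneg (a r : ℝ) : 0 ≤ J a r := by
  unfold J
  have : |r| ≤ √(r ^ 2 + a ^ 2) := Real.abs_le_sqrt (by nlinarith [sq_nonneg a])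
  have := neg_abs_le r
  linarith

lemma J_le {a : ℝ} (ha : 0 ≤ a) (ha1 : a ≤ 1) (r : ℝ) : |J a r| ≤ |r| + 1 := by
  rw [abs_of_nonneg (J_nonneg a r)]
  unfold J
  have : √(r ^ 2 + a ^ 2) ≤ |r| + a := by
    rw [Real.sqrt_le_left (by positivity)]
    nlinarith [abs_nonneg r, sq_abs r, mul_nonneg (abs_nonneg r) ha]
  have := le_abs_self r
  linarith

lemma et_mem (a r : ℝ) : 0 ≤ et a r ∧ et a r ≤ 1 := by
  unfold et
  have h : |r| ≤ √(r ^ 2 + a ^ 2) := Real.abs_le_sqrt (by nlinarith [sq_nonneg a])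
  have h2 : |r / √(r ^ 2 + a ^ 2)| ≤ 1 := by
    rw [abs_div, abs_of_nonneg (Real.sqrt_nonneg _)]
    exact div_le_one_of_le₀ h (Real.sqrt_nonneg _)
  have := abs_le.1 h2
  constructor <;> linarith

lemma J_tend (r : ℝ) : Filter.Tendsto (fun a => J a r) (𝓝 0) (𝓝 (max r 0)) := by
  have h : Continuous (fun a : ℝ => J a r) := by unfold J; fun_prop
  have h2 := h.tendsto 0
  have : J 0 r = max r 0 := by
    unfold J
    simp only [ne_eq, OfNat.ofNat_ne_zero, not_false_eq_true, zero_pow, add_zero, Real.sqrt_sq_eq_abs]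
    rcases le_total r 0 with h | h
    · rw [abs_of_nonpos h, max_eq_right h]; ring
    · rw [abs_of_nonneg h, max_eq_left h]; ring
  rwa [this] at h2

lemma et_tend {r : ℝ} (hr : r ≠ 0) :
    Filter.Tendsto (fun a => et a r) (𝓝 0) (𝓝 ((1 + r / |r|) / 2)) := by
  have h : ContinuousAt (fun a : ℝ => et a r) 0 := by
    unfold et
    have : √(r ^ 2 + (0:ℝ) ^ 2) ≠ 0 := by simp [Real.sqrt_sq_eq_abs, hr]
    fun_prop (disch := assumption)
  have h2 := h.tendsto
  simpa [et, Real.sqrt_sq_eq_abs] using h2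

lemma et_diff {r q : ℝ} (h1 : 0 < r ↔ 0 < q) (h2 : r < 0 ↔ q < 0) :
    Filter.Tendsto (fun a => et a r - et a q) (𝓝 0) (𝓝 0) := by
  rcases lt_trichotomy r 0 with h | h | h
  · have hq := h2.1 h
    have := (et_tend h.ne).sub (et_tend hq.ne)
    rw [abs_of_neg h, abs_of_neg hq, div_neg, div_neg, div_self h.ne, div_self hq.ne] at this
    simpa using this
  · subst h
    have : q = 0 := by
      have a1 : ¬ (0 < q) := fun h => lt_irrefl _ (h1.2 h)
      have a2 : ¬ (q < 0) := fun h => lt_irrefl _ (h2.2 h)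
      linarith
    subst this
    simp
  · have hq := h1.1 h
    have := (et_tend h.ne').sub (et_tend hq.ne')
    rw [abs_of_pos h, abs_of_pos hq, div_self h.ne', div_self hq.ne'] at this
    simpa using this

section kato
variable {d : ℕ}

noncomputable def vt (d : ℕ) : ℝ × EuclideanSpace ℝ (Fin d) := (1, 0)
noncomputable def ve {d : ℕ} (i : Fin d) : ℝ × EuclideanSpace ℝ (Fin d) :=
  (0, EuclideanSpace.single i 1)

noncomputable def LL (F : ℝ × EuclideanSpace ℝ (Fin d) → ℝ) (p : ℝ × EuclideanSpace ℝ (Fin d)) : ℝ :=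
  ∑ i : Fin d, dd (ve i) (dd (ve i) F) p

instance haarP : (volume : Measure (ℝ × EuclideanSpace ℝ (Fin d))).IsAddHaarMeasure :=
  inferInstanceAs ((volume : Measure ℝ).prod
    (volume : Measure (EuclideanSpace ℝ (Fin d)))).IsAddHaarMeasure

lemma LL_smooth {F : ℝ × EuclideanSpace ℝ (Fin d) → ℝ} {Q : Set (ℝ × EuclideanSpace ℝ (Fin d))}
    (hQ : IsOpen Q) (hF : ContDiffOn ℝ ∞ F Q) : ContDiffOn ℝ ∞ (LL F) Q := by
  unfold LL
  exact ContDiffOn.sum fun i _ => dd_smooth hQ _ (dd_smooth hQ _ hF)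

lemma LL_off {F : ℝ × EuclideanSpace ℝ (Fin d) → ℝ} {K : Set (ℝ × EuclideanSpace ℝ (Fin d))}
    (hK : IsClosed K) (h0 : ∀ p, p ∉ K → F p = 0) : ∀ p, p ∉ K → LL F p = 0 := by
  intro p hp
  unfold LL
  exact Finset.sum_eq_zero fun i _ => dd_off hK _ (dd_off hK _ h0) p hp

lemma dd2_comp {F : ℝ × EuclideanSpace ℝ (Fin d) → ℝ} {Q : Set (ℝ × EuclideanSpace ℝ (Fin d))}
    (hQ : IsOpen Q) (hF : ContDiffOn ℝ ∞ F Q) {g g' : ℝ → ℝ} {g'' : ℝ}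
    (v p : ℝ × EuclideanSpace ℝ (Fin d)) (hp : p ∈ Q)
    (hg : ∀ r, HasDerivAt g (g' r) r) (hg' : HasDerivAt g' g'' (F p)) :
    dd v (dd v (fun q => g (F q))) p = g'' * dd v F p ^ 2 + g' (F p) * dd v (dd v F) p := by
  have h1 : dd v (fun q => g (F q)) =ᶠ[𝓝 p] fun q => g' (F q) * dd v F q := by
    filter_upwards [hQ.mem_nhds hp] with q hq using dd_comp v (hg _) (da hQ hF hq)
  rw [dd_congr v h1, dd_mul v (F := fun q => g' (F q)) (hg'.differentiableAt.comp p (da hQ hF hp))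
    (da hQ (dd_smooth hQ v hF) hp)]
  · rw [dd_comp v hg' (da hQ hF hp)]; ring

variable {Q K : Set (ℝ × EuclideanSpace ℝ (Fin d))} {f φ ζ : ℝ × EuclideanSpace ℝ (Fin d) → ℝ}

lemma kato_a (hQ : IsOpen Q) (hK : IsCompact K) (hKQ : K ⊆ Q)
    (hf : ContDiffOn ℝ ∞ f Q) (hφ : ContDiffOn ℝ ∞ φ Q) (hζ : ContDiff ℝ ∞ ζ)
    (hζ0 : ∀ p, 0 ≤ ζ p) (hs : ∀ p, p ∉ K → ζ p = 0)
    (heq : ∀ p ∈ Q, dd (vt d) f p = LL φ p) {a : ℝ} (ha : 0 < a) :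
    0 ≤ ∫ p, (J a (f p) * dd (vt d) ζ p + J a (φ p) * LL ζ p +
      (et a (f p) - et a (φ p)) * dd (vt d) f p * ζ p) := by
  have hζQ : ContDiffOn ℝ ∞ ζ Q := hζ.contDiffOn
  have hG : ContDiffOn ℝ ∞ (fun q => J a (φ q)) Q := (J_smooth ha).comp_contDiffOn hφ
  have hJf : ContDiffOn ℝ ∞ (fun q => J a (f q)) Q := (J_smooth ha).comp_contDiffOn hf
  have hef : ContDiffOn ℝ ∞ (fun q => et a (f q)) Q := (et_smooth ha).comp_contDiffOn hf
  have heφ : ContDiffOn ℝ ∞ (fun q => et a (φ q)) Q := (et_smooth ha).comp_contDiffOn hφ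
  have hKc := hK.isClosed
  have h0 := div0 (μ := volume) hQ hK hKQ (hJf.mul hζQ) (fun p hp => by simp [hs p hp]) (vt d)
  have hi : ∀ i : Fin d, _ := fun i => div0 (μ := volume) hQ hK hKQ
    ((hζQ.mul (dd_smooth hQ (ve i) hG)).sub (hG.mul (dd_smooth hQ (ve i) hζQ)))
    (fun p hp => by simp [hs p hp, dd_off hKc _ hs p hp]) (ve i)
  have e1 := integral_sub h0.1 (integrable_finsetSum Finset.univ fun i _ => (hi i).1)
  rw [integral_finsetSum _ (fun i _ => (hi i).1), h0.2,
    Finset.sum_eq_zero (fun i _ => (hi i).2), sub_zero] at e1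
  rw [← e1]
  refine integral_mono (h0.1.sub (integrable_finsetSum Finset.univ fun i _ => (hi i).1)) ?_ ?_
  · refine intg hQ hK hKQ ?_ ?_
    · exact ((hJf.continuousOn.mul (dd_smooth hQ _ hζQ).continuousOn).add
        (hG.continuousOn.mul (LL_smooth hQ hζQ).continuousOn)).add
        (((hef.continuousOn.sub heφ.continuousOn).mul (dd_smooth hQ _ hf).continuousOn).mul
          hζQ.continuousOn)
    · intro p hp
      simp [hs p hp, dd_off hKc _ hs p hp, LL_off hKc hs p hp]
  · intro p
    by_cases hp : p ∈ Q
    · have A1 : dd (vt d) (fun q => J a (f q) * ζ q) p =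
          et a (f p) * dd (vt d) f p * ζ p + J a (f p) * dd (vt d) ζ p := by
        rw [dd_mul _ (da hQ hJf hp) (da hQ hζQ hp), dd_comp _ (J_deriv ha _) (da hQ hf hp)]
      have A2 : ∀ i : Fin d, J a (φ p) * dd (ve i) (dd (ve i) ζ) p +
          dd (ve i) (fun q => ζ q * dd (ve i) (fun q => J a (φ q)) q
            - J a (φ q) * dd (ve i) ζ q) p ≥ ζ p * (et a (φ p) * dd (ve i) (dd (ve i) φ) p) := by
        intro i
        obtain ⟨e', he0, he⟩ := et_deriv ha (φ p)
        rw [dd_sub _ ((da hQ hζQ hp).fun_mul (da hQ (dd_smooth hQ (ve i) hG) hp))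
          ((da hQ hG hp).fun_mul (da hQ (dd_smooth hQ (ve i) hζQ) hp)),
          dd_mul _ (da hQ hζQ hp) (da hQ (dd_smooth hQ (ve i) hG) hp),
          dd_mul _ (da hQ hG hp) (da hQ (dd_smooth hQ (ve i) hζQ) hp),
          dd2_comp hQ hφ (ve i) p hp (J_deriv ha) he]
        have := mul_nonneg (hζ0 p) (mul_nonneg he0 (sq_nonneg (dd (ve i) φ p)))
        nlinarith
      have A3 := Finset.sum_le_sum fun i (_ : i ∈ Finset.univ) => A2 i
      rw [Finset.sum_add_distrib, ← Finset.mul_sum, ← Finset.mul_sum, ← Finset.mul_sum] at A3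
      have h5 := heq p hp
      unfold LL at h5 ⊢
      rw [← h5] at A3
      have A1' : dd (vt d) ((fun q => J a (f q)) * ζ) p =
          et a (f p) * dd (vt d) f p * ζ p + J a (f p) * dd (vt d) ζ p := A1
      simp only [A1]
      linarith
    · have hpK : p ∉ K := fun h => hp (hKQ h)
      have B1 := dd_off hKc (vt d) (F := fun q => J a (f q) * ζ q) (fun p hp => by simp [hs p hp]) p hpK
      have B2 : ∀ i : Fin d, _ := fun i => dd_off hKc (ve i) (F := fun q =>
        ζ q * dd (ve i) (fun q => J a (φ q)) q - J a (φ q) * dd (ve i) ζ q)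
        (fun p hp => by simp [hs p hp, dd_off hKc _ hs p hp]) p hpK
      simp only [B1, B2, hs p hpK, dd_off hKc _ hs p hpK, LL_off hKc hs p hpK]
      simp

lemma kato (hQ : IsOpen Q) (hK : IsCompact K) (hKQ : K ⊆ Q)
    (hf : ContDiffOn ℝ ∞ f Q) (hφ : ContDiffOn ℝ ∞ φ Q) (hζ : ContDiff ℝ ∞ ζ)
    (hζ0 : ∀ p, 0 ≤ ζ p) (hs : ∀ p, p ∉ K → ζ p = 0)
    (heq : ∀ p ∈ Q, dd (vt d) f p = LL φ p)
    (hsg : ∀ p ∈ Q, (0 < f p ↔ 0 < φ p) ∧ (f p < 0 ↔ φ p < 0)) :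
    0 ≤ ∫ p, (max (f p) 0 * dd (vt d) ζ p + max (φ p) 0 * LL ζ p) := by
  have hζQ : ContDiffOn ℝ ∞ ζ Q := hζ.contDiffOn
  have hKc := hK.isClosed
  have hdz := dd_off hKc (vt d) hs
  have hLz := LL_off hKc hs
  let a : ℕ → ℝ := fun n => 1 / ((n : ℝ) + 1)
  have ha : ∀ n, 0 < a n := fun n => Nat.one_div_pos_of_nat
  have ha1 : ∀ n, a n ≤ 1 := fun n => by
    simp only [a]; rw [div_le_one (by positivity)]; linarith [(Nat.cast_nonneg n : (0:ℝ) ≤ n)]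
  have hat : Filter.Tendsto a Filter.atTop (𝓝 0) := tendsto_one_div_add_atTop_nhds_zero_nat
  have key := tendsto_integral_of_dominated_convergence (μ := volume)
    (F := fun n p => (J (a n) (f p) * dd (vt d) ζ p + J (a n) (φ p) * LL ζ p +
      (et (a n) (f p) - et (a n) (φ p)) * dd (vt d) f p * ζ p))
    (f := fun p => (max (f p) 0 * dd (vt d) ζ p + max (φ p) 0 * LL ζ p))
    (fun p => (|f p| + 1) * |dd (vt d) ζ p| + (|φ p| + 1) * |LL ζ p| + |dd (vt d) f p| * |ζ p|)
    ?_ ?_ ?_ ?_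
  · exact ge_of_tendsto' key fun n => kato_a hQ hK hKQ hf hφ hζ hζ0 hs heq (ha n)
  · intro n
    refine (intg (Q := Q) hQ hK hKQ ?_ ?_).aestronglyMeasurable
    · have hJ := J_smooth (ha n)
      have hE := et_smooth (ha n)
      exact (((hJ.comp_contDiffOn hf).continuousOn.mul (dd_smooth hQ _ hζQ).continuousOn).add
        ((hJ.comp_contDiffOn hφ).continuousOn.mul (LL_smooth hQ hζQ).continuousOn)).add
        ((((hE.comp_contDiffOn hf).continuousOn.sub (hE.comp_contDiffOn hφ).continuousOn).mul
          (dd_smooth hQ _ hf).continuousOn).mul hζQ.continuousOn)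
    · intro p hp
      simp [hs p hp, hdz p hp, hLz p hp]
  · refine intg (Q := Q) hQ hK hKQ ?_ ?_
    · exact (((hf.continuousOn.abs.add continuousOn_const).mul
        (dd_smooth hQ _ hζQ).continuousOn.abs).add
        ((hφ.continuousOn.abs.add continuousOn_const).mul (LL_smooth hQ hζQ).continuousOn.abs)).add
        ((dd_smooth hQ _ hf).continuousOn.abs.mul hζQ.continuousOn.abs)
    · intro p hp
      simp [hs p hp, hdz p hp, hLz p hp]
  · intro n
    refine Filter.Eventually.of_forall fun p => ?_
    rw [Real.norm_eq_abs]
    refine (abs_add_le _ _).trans (add_le_add ((abs_add_le _ _).trans (add_le_add ?_ ?_)) ?_)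
    · rw [abs_mul]; exact mul_le_mul_of_nonneg_right (J_le (ha n).le (ha1 n) _) (abs_nonneg _)
    · rw [abs_mul]; exact mul_le_mul_of_nonneg_right (J_le (ha n).le (ha1 n) _) (abs_nonneg _)
    · rw [abs_mul, abs_mul, mul_assoc]
      refine mul_le_of_le_one_left (by positivity) ?_
      have h1 := et_mem (a n) (f p)
      have h2 := et_mem (a n) (φ p)
      rw [abs_le]; constructor <;> linarith
  · refine Filter.Eventually.of_forall fun p => ?_
    by_cases hp : p ∈ K
    · have h1 := ((J_tend (f p)).comp hat).mul_const (dd (vt d) ζ p)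
      have h2 := ((J_tend (φ p)).comp hat).mul_const (LL ζ p)
      have h3 := ((((et_diff (hsg p (hKQ hp)).1 (hsg p (hKQ hp)).2).comp hat).mul_const
        (dd (vt d) f p)).mul_const (ζ p))
      have h4 := (h1.add h2).add h3
      simpa using h4
    · simp [hs p hp, hdz p hp, hLz p hp]

end kato

noncomputable def gp (δ r : ℝ) : ℝ := Real.smoothTransition (r / δ - 1)
noncomputable def gg (δ r : ℝ) : ℝ := ∫ x in (0:ℝ)..r, gp δ x

lemma gp_smooth (δ : ℝ) : ContDiff ℝ ∞ (gp δ) := by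
  unfold gp
  exact Real.smoothTransition.contDiff.comp ((contDiff_id.div_const δ).sub contDiff_const)

lemma gp_cont (δ : ℝ) : Continuous (gp δ) := (gp_smooth δ).continuous

lemma gg_deriv (δ r : ℝ) : HasDerivAt (gg δ) (gp δ r) r :=
  intervalIntegral.integral_hasDerivAt_right ((gp_cont δ).intervalIntegrable _ _)
    (gp_cont δ).stronglyMeasurable.stronglyMeasurableAtFilter (gp_cont δ).continuousAt

lemma gg_smooth (δ : ℝ) : ContDiff ℝ ∞ (gg δ) := by
  rw [contDiff_infty_iff_deriv]
  refine ⟨fun r => (gg_deriv δ r).differentiableAt, ?_⟩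
  have : deriv (gg δ) = gp δ := funext fun r => (gg_deriv δ r).deriv
  rw [this]; exact gp_smooth δ

lemma gp_nonneg (δ r : ℝ) : 0 ≤ gp δ r := Real.smoothTransition.nonneg _
lemma gp_le (δ r : ℝ) : gp δ r ≤ 1 := Real.smoothTransition.le_one _

lemma gp_zero {δ r : ℝ} (hδ : 0 < δ) (h : r ≤ δ) : gp δ r = 0 := by
  apply Real.smoothTransition.zero_of_nonpos
  rw [sub_nonpos, div_le_one hδ]; exact h

lemma gp_one {δ r : ℝ} (hδ : 0 < δ) (h : 2 * δ ≤ r) : gp δ r = 1 := by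
  apply Real.smoothTransition.one_of_one_le
  rw [le_sub_iff_add_le, le_div_iff₀ hδ]; linarith

lemma gp_mono {δ : ℝ} (hδ : 0 < δ) : Monotone (gp δ) := by
  intro x y h
  apply Real.smoothTransition.monotone
  gcongr

lemma gp_deriv {δ : ℝ} (hδ : 0 < δ) (r : ℝ) :
    ∃ g', HasDerivAt (gp δ) g' r ∧ 0 ≤ g' ∧ (2 * δ ≤ r → g' = 0) := by
  refine ⟨deriv (gp δ) r, ((gp_smooth δ).differentiable (by simp) r).hasDerivAt,
    (gp_mono hδ).deriv_nonneg, fun h => ?_⟩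
  apply IsLocalMax.deriv_eq_zero
  refine Filter.Eventually.of_forall fun y => ?_
  rw [gp_one hδ h]; exact gp_le _ _

lemma gg_zero {δ r : ℝ} (hδ : 0 < δ) (h : r ≤ δ) : gg δ r = 0 := by
  unfold gg
  rw [intervalIntegral.integral_congr (g := fun _ => (0:ℝ))]
  · simp
  · intro x hx
    rw [mem_uIcc] at hx
    apply gp_zero hδ
    rcases hx with hx | hx <;> linarith

lemma gg_nonneg {δ : ℝ} (hδ : 0 < δ) (r : ℝ) : 0 ≤ gg δ r := by
  rcases le_total r 0 with h | h
  · rw [gg_zero hδ (by linarith)]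
  · exact intervalIntegral.integral_nonneg h fun x _ => gp_nonneg _ _

lemma gg_le {δ r : ℝ} (h : 0 ≤ r) : gg δ r ≤ r := by
  have := intervalIntegral.integral_mono_on h ((gp_cont δ).intervalIntegrable 0 r)
    (continuous_const.intervalIntegrable (μ := volume) 0 r) (fun x _ => gp_le δ x)
  simpa [gg] using this

lemma gg_ge {δ r : ℝ} (hδ : 0 < δ) (h : 2 * δ ≤ r) : r - 2 * δ ≤ gg δ r := by
  have h1 : gg δ r = gg δ (2 * δ) + ∫ x in (2 * δ)..r, gp δ x :=
    (intervalIntegral.integral_add_adjacent_intervals ((gp_cont δ).intervalIntegrable _ _)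
      ((gp_cont δ).intervalIntegrable _ _)).symm
  have h2 : ∫ x in (2 * δ)..r, gp δ x = r - 2 * δ := by
    rw [intervalIntegral.integral_congr (g := fun _ => (1:ℝ))]
    · simp
    · intro x hx
      rw [uIcc_of_le h] at hx
      exact gp_one hδ hx.1
  rw [h1, h2]
  linarith [gg_nonneg hδ (2 * δ)]

lemma cpt_pos {X : Type*} [TopologicalSpace X] {A : Set X} {ψ : X → ℝ} (hA : IsCompact A)
    (hψ : ContinuousOn ψ A) (hp : ∀ p ∈ A, 0 < ψ p) : ∃ δ > 0, ∀ p ∈ A, δ < ψ p := by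
  rcases A.eq_empty_or_nonempty with h | h
  · exact ⟨1, one_pos, by simp [h]⟩
  · obtain ⟨p, hpA, hm⟩ := hA.exists_isMinOn h hψ
    exact ⟨ψ p / 2, by linarith [hp p hpA], fun q hq => by
      have : ψ p ≤ ψ q := hm hq
      linarith [hp p hpA]⟩

section comp
variable {d : ℕ}

lemma dd_fst (v p : ℝ × EuclideanSpace ℝ (Fin d)) :
    dd v (fun q : ℝ × EuclideanSpace ℝ (Fin d) => q.1) p = v.1 := by
  have : HasFDerivAt (fun q : ℝ × EuclideanSpace ℝ (Fin d) => q.1)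
    (ContinuousLinearMap.fst ℝ ℝ (EuclideanSpace ℝ (Fin d))) p := hasFDerivAt_fst
  unfold dd
  rw [this.fderiv]; rfl

lemma dd_snd {s : EuclideanSpace ℝ (Fin d) → ℝ} (v p : ℝ × EuclideanSpace ℝ (Fin d))
    (hs : DifferentiableAt ℝ s p.2) :
    dd v (fun q : ℝ × EuclideanSpace ℝ (Fin d) => s q.2) p = dd v.2 s p.2 := by
  have : HasFDerivAt (fun q : ℝ × EuclideanSpace ℝ (Fin d) => q.2)
    (ContinuousLinearMap.snd ℝ ℝ (EuclideanSpace ℝ (Fin d))) p := hasFDerivAt_snd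
  have h2 := HasFDerivAt.comp p hs.hasFDerivAt this
  unfold dd
  have h3 : (fun q : ℝ × EuclideanSpace ℝ (Fin d) => s q.2) = s ∘ fun q => q.2 := rfl
  rw [h3, h2.fderiv]; rfl

lemma comparison {T : ℝ} {D Kb : Set (EuclideanSpace ℝ (Fin d))} (hD : IsOpen D)
    (hKb : IsCompact Kb) (hDK : D ⊆ Kb) {s : EuclideanSpace ℝ (Fin d) → ℝ} (hs : ContDiff ℝ ∞ s)
    (hspos : ∀ x ∈ D, 0 < s x) (hs0 : ∀ x ∈ Kb, x ∉ D → s x = 0)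
    {C M : ℝ} (hC : 0 ≤ C) (hM : ∀ x ∈ D, s x ≤ M)
    (hLs : ∀ t, ∀ x ∈ D, -C ≤ LL (fun p => s p.2) (t, x) ∧ LL (fun p => s p.2) (t, x) ≤ 0)
    {f φ : ℝ × EuclideanSpace ℝ (Fin d) → ℝ}
    (hfc : ContinuousOn f (Icc 0 T ×ˢ Kb)) (hφc : ContinuousOn φ (Icc 0 T ×ˢ Kb))
    (hf : ContDiffOn ℝ ∞ f (Ioo 0 T ×ˢ D)) (hφ : ContDiffOn ℝ ∞ φ (Ioo 0 T ×ˢ D))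
    (heq : ∀ p ∈ Ioo 0 T ×ˢ D, dd (vt d) f p = LL φ p)
    (hsg : ∀ p ∈ Ioo 0 T ×ˢ D, (0 < f p ↔ 0 < φ p) ∧ (f p < 0 ↔ φ p < 0))
    (hinit : ∀ x ∈ Kb, f (0, x) ≤ 0)
    (hbd : ∀ t ∈ Icc 0 T, ∀ x ∈ Kb, x ∉ D → φ (t, x) ≤ 0) :
    ∀ p ∈ Ioo 0 T ×ˢ D, f p ≤ 0 := by
  intro p₀ hp₀
  by_contra hcon
  rw [not_le] at hcon
  set Q : Set (ℝ × EuclideanSpace ℝ (Fin d)) := Ioo 0 T ×ˢ D with hQdef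
  have hQ : IsOpen Q := isOpen_Ioo.prod hD
  have hQK : Q ⊆ Icc 0 T ×ˢ Kb := prod_mono Ioo_subset_Icc_self hDK
  have hKKc : IsCompact (Icc 0 T ×ˢ Kb) := isCompact_Icc.prod hKb
  have hT : 0 < T := hp₀.1.1.trans hp₀.1.2
  have hM0 : 0 ≤ M := (hspos _ hp₀.2).le.trans (hM _ hp₀.2)
  -- the neighbourhood N
  obtain ⟨c, hc, hc1, hc2, hc3, hc4⟩ : ∃ c > 0, c < f p₀ ∧ 2 * c < s p₀.2 ∧ c < p₀.1 ∧
      p₀.1 < T - c := by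
    have a1 := hcon; have a2 := hspos _ hp₀.2; have a3 := hp₀.1.1; have a4 := hp₀.1.2
    refine ⟨min (min (f p₀ / 2) (s p₀.2 / 4)) (min (p₀.1 / 2) ((T - p₀.1) / 2)), ?_, ?_, ?_, ?_, ?_⟩
    · refine lt_min (lt_min ?_ ?_) (lt_min ?_ ?_) <;> linarith
    · have := (min_le_left (min (f p₀ / 2) (s p₀.2 / 4)) (min (p₀.1 / 2) ((T - p₀.1) / 2))).trans
        (min_le_left _ _)
      linarith
    · have := (min_le_left (min (f p₀ / 2) (s p₀.2 / 4)) (min (p₀.1 / 2) ((T - p₀.1) / 2))).trans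
        (min_le_right _ _)
      linarith
    · have := (min_le_right (min (f p₀ / 2) (s p₀.2 / 4)) (min (p₀.1 / 2) ((T - p₀.1) / 2))).trans
        (min_le_left _ _)
      linarith
    · have := (min_le_right (min (f p₀ / 2) (s p₀.2 / 4)) (min (p₀.1 / 2) ((T - p₀.1) / 2))).trans
        (min_le_right _ _)
      linarith
  let N : Set (ℝ × EuclideanSpace ℝ (Fin d)) :=
    (Q ∩ f ⁻¹' Ioi c) ∩ {p | 2 * c < s p.2 ∧ c < p.1 ∧ p.1 < T - c}
  have hNo : IsOpen N := by
    refine (hf.continuousOn.isOpen_inter_preimage hQ isOpen_Ioi).inter ?_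
    have o1 : IsOpen {p : ℝ × EuclideanSpace ℝ (Fin d) | 2 * c < s p.2} :=
      isOpen_lt continuous_const (hs.continuous.comp continuous_snd)
    have o2 : IsOpen {p : ℝ × EuclideanSpace ℝ (Fin d) | c < p.1} :=
      isOpen_lt continuous_const continuous_fst
    have o3 : IsOpen {p : ℝ × EuclideanSpace ℝ (Fin d) | p.1 < T - c} :=
      isOpen_lt continuous_fst continuous_const
    exact o1.inter (o2.inter o3)
  have hNne : N.Nonempty := ⟨p₀, ⟨hp₀, hc1⟩, hc2, hc3, hc4⟩
  have hNQ : N ⊆ Q := fun p hp => hp.1.1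
  have hQfin : volume Q ≠ ⊤ := ((measure_mono hQK).trans_lt hKKc.measure_lt_top).ne
  have hNfin : volume N ≠ ⊤ := ((measure_mono (hNQ.trans hQK)).trans_lt hKKc.measure_lt_top).ne
  have hNpos : 0 < (volume N).toReal := ENNReal.toReal_pos (hNo.measure_pos _ hNne).ne' hNfin
  -- choice of eps
  obtain ⟨ε, hε, hε1⟩ : ∃ ε > 0, ε * (M + C * T) * (volume Q).toReal < c ^ 2 * (volume N).toReal := by
    have hB : 0 ≤ (M + C * T) * (volume Q).toReal := by positivity
    have hA : 0 < c ^ 2 * (volume N).toReal := by positivity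
    refine ⟨c ^ 2 * (volume N).toReal / ((M + C * T) * (volume Q).toReal + 1), by positivity, ?_⟩
    rw [mul_assoc, div_mul_eq_mul_div, div_lt_iff₀ (by positivity)]
    nlinarith
  -- choice of delta
  obtain ⟨δ₁, hδ₁, hd1⟩ := cpt_pos (A := (Icc 0 T ×ˢ Kb) ∩ f ⁻¹' Ici ε) (ψ := fun p => p.1)
    (hKKc.of_isClosed_subset (hfc.preimage_isClosed_of_isClosed hKKc.isClosed isClosed_Ici)
      inter_subset_left) continuous_fst.continuousOn (by
      rintro ⟨t, x⟩ ⟨⟨h1, h2⟩, h3⟩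
      rcases h1.1.lt_or_eq with h | h
      · exact h
      · exfalso
        have h4 := hinit x h2
        simp only at h
        rw [h] at h4
        have h5 : ε ≤ f (t, x) := h3
        linarith)
  obtain ⟨δ₂, hδ₂, hd2⟩ := cpt_pos (A := (Icc 0 T ×ˢ Kb) ∩ φ ⁻¹' Ici ε) (ψ := fun p => s p.2)
    (hKKc.of_isClosed_subset (hφc.preimage_isClosed_of_isClosed hKKc.isClosed isClosed_Ici)
      inter_subset_left) (hs.continuous.comp continuous_snd).continuousOn (by
      rintro ⟨t, x⟩ ⟨⟨h1, h2⟩, h3⟩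
      by_contra h
      have h4 : x ∉ D := fun h' => h (hspos x h')
      have h5 := hbd t h1 x h2 h4
      have h6 : ε ≤ φ (t, x) := h3
      linarith)
  obtain ⟨δ, hδ, hδ1, hδ2, hδc⟩ : ∃ δ > 0, 2 * δ ≤ δ₁ ∧ 2 * δ ≤ δ₂ ∧ 2 * δ ≤ c := by
    refine ⟨min δ₁ (min δ₂ c) / 2, by positivity, ?_, ?_, ?_⟩
    · linarith [min_le_left δ₁ (min δ₂ c)]
    · linarith [min_le_right δ₁ (min δ₂ c), min_le_left δ₂ c]
    · linarith [min_le_right δ₁ (min δ₂ c), min_le_right δ₂ c]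
  have hfε : ∀ p ∈ Q, p.1 < 2 * δ → f p ≤ ε := by
    intro p hp h
    by_contra h'
    have : δ₁ < p.1 := hd1 p ⟨hQK hp, (not_le.1 h').le⟩
    linarith
  have hφε : ∀ p ∈ Q, s p.2 < 2 * δ → φ p ≤ ε := by
    intro p hp h
    by_contra h'
    have : δ₂ < s p.2 := hd2 p ⟨hQK hp, (not_le.1 h').le⟩
    linarith
  -- test function
  let χ : ℝ → ℝ := fun t => gp δ t * gg δ (T - t)
  have hχs : ContDiff ℝ ∞ χ :=
    (gp_smooth δ).mul ((gg_smooth δ).comp (contDiff_const.sub contDiff_id))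
  have hχ0 : ∀ t, 0 ≤ χ t := fun t => mul_nonneg (gp_nonneg _ _) (gg_nonneg hδ _)
  let ζ₁ : ℝ × EuclideanSpace ℝ (Fin d) → ℝ := fun p => χ p.1 * gg δ (s p.2)
  have hζ₁ : ContDiff ℝ ∞ ζ₁ :=
    (hχs.comp contDiff_fst).mul ((gg_smooth δ).comp (hs.comp contDiff_snd))
  classical
  let ζ : ℝ × EuclideanSpace ℝ (Fin d) → ℝ := fun p => if p.2 ∈ D then ζ₁ p else 0
  let K : Set (ℝ × EuclideanSpace ℝ (Fin d)) := Icc δ (T - δ) ×ˢ (Kb ∩ s ⁻¹' Ici δ)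
  have hK : IsCompact K := isCompact_Icc.prod
    (hKb.inter_right (isClosed_Ici.preimage hs.continuous))
  have hKD : ∀ p ∈ K, p.2 ∈ D := by
    intro p hp
    by_contra h
    have h1 := hs0 _ hp.2.1 h
    have h2 : δ ≤ s p.2 := hp.2.2
    linarith
  have hKQ : K ⊆ Q := fun p hp =>
    ⟨⟨by linarith [hp.1.1], by linarith [hp.1.2]⟩, hKD p hp⟩
  have hζK : ∀ p, p ∉ K → ζ p = 0 := by
    intro p hp
    by_cases hpD : p.2 ∈ D
    · simp only [ζ, hpD, if_true, ζ₁, χ]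
      by_cases h1 : p.1 ≤ δ
      · simp [gp_zero hδ h1]
      by_cases h2 : T - p.1 ≤ δ
      · simp [gg_zero hδ h2]
      by_cases h3 : s p.2 ≤ δ
      · simp [gg_zero hδ h3]
      exfalso
      push Not at h1 h2 h3
      exact hp ⟨⟨h1.le, by linarith⟩, hDK hpD, h3.le⟩
    · simp [ζ, hpD]
  have hζeq : ∀ p ∈ Q, ζ =ᶠ[𝓝 p] ζ₁ := by
    intro p hp
    filter_upwards [hQ.mem_nhds hp] with q hq
    simp [ζ, hq.2]
  have hζQ : ContDiffOn ℝ ∞ ζ Q :=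
    hζ₁.contDiffOn.congr fun p hp => (hζeq p hp).self_of_nhds
  have hζ : ContDiff ℝ ∞ ζ := glob hQ hK.isClosed hKQ hζQ hζK
  have hζ0 : ∀ p, 0 ≤ ζ p := by
    intro p
    simp only [ζ]
    split_ifs
    · exact mul_nonneg (hχ0 _) (gg_nonneg hδ _)
    · exact le_rfl
  have kt := kato hQ hK hKQ hf hφ hζ hζ0 hζK heq hsg
  have hdt := div0 (μ := volume) hQ hK hKQ hζQ hζK (vt d)
  have hLL : Integrable (LL ζ) volume ∧ ∫ p, LL ζ p = 0 := by
    have h := fun i : Fin d => div0 (μ := volume) hQ hK hKQ (dd_smooth hQ (ve i) hζQ)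
      (dd_off hK.isClosed (ve i) hζK) (ve i)
    unfold LL
    refine ⟨integrable_finsetSum _ fun i _ => (h i).1, ?_⟩
    rw [integral_finsetSum _ (fun i _ => (h i).1)]
    exact Finset.sum_eq_zero fun i _ => (h i).2
  -- derivative computations
  let G : ℝ × EuclideanSpace ℝ (Fin d) → ℝ := fun p => gg δ (s p.2)
  have hSs : ContDiff ℝ ∞ (fun p : ℝ × EuclideanSpace ℝ (Fin d) => s p.2) := hs.comp contDiff_snd
  have hG : ContDiff ℝ ∞ G := (gg_smooth δ).comp hSs
  have hX : ContDiff ℝ ∞ (fun p : ℝ × EuclideanSpace ℝ (Fin d) => χ p.1) := hχs.comp contDiff_fst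
  have n0 : (∞ : WithTop ℕ∞) ≠ 0 := by simp
  have hXi : ∀ i : Fin d, ∀ p, dd (ve i) (fun p : ℝ × EuclideanSpace ℝ (Fin d) => χ p.1) p = 0 := by
    intro i p
    rw [dd_comp (F := fun p : ℝ × EuclideanSpace ℝ (Fin d) => p.1) (ve i)
      ((hχs.differentiable n0 _).hasDerivAt) (by fun_prop), dd_fst]
    simp [ve]
  have e1 : ∀ p ∈ Q, ∃ θ', 0 ≤ θ' ∧ (2 * δ ≤ p.1 → θ' = 0) ∧ dd (vt d) ζ p =
      (θ' * gg δ (T - p.1) - gp δ p.1 * gp δ (T - p.1)) * G p := by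
    intro p hp
    obtain ⟨θ', h1, h2, h3⟩ := gp_deriv hδ p.1
    refine ⟨θ', h2, h3, ?_⟩
    rw [dd_congr _ (hζeq p hp)]
    have hb : HasDerivAt χ (θ' * gg δ (T - p.1) + gp δ p.1 * (gp δ (T - p.1) * (-1))) p.1 := by
      refine h1.mul ?_
      exact (gg_deriv δ (T - p.1)).comp p.1 ((hasDerivAt_id p.1).const_sub T)
    have h4 := dd_mul (p := p) (vt d) (hX.differentiable n0 p) (hG.differentiable n0 p)
    have h5 : dd (vt d) ζ₁ p = _ := h4
    rw [h5, dd_comp (F := fun p : ℝ × EuclideanSpace ℝ (Fin d) => p.1) (vt d) hb (by fun_prop),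
      dd_fst, dd_comp (F := fun p : ℝ × EuclideanSpace ℝ (Fin d) => s p.2) (vt d)
      (gg_deriv δ _) (hSs.differentiable n0 p), dd_snd _ _ (hs.differentiable n0 _)]
    have z : dd (vt d).2 s p.2 = 0 := by simp [vt, dd]
    have z1 : (vt d).1 = 1 := rfl
    rw [z, z1]; ring
  have e2 : ∀ p ∈ Q, ∃ L, -C ≤ L ∧ (2 * δ ≤ s p.2 → L ≤ 0) ∧ LL ζ p = χ p.1 * L := by
    intro p hp
    obtain ⟨g'', h1, h2, h3⟩ := gp_deriv hδ (s p.2)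
    have hLi : ∀ i : Fin d, dd (ve i) (dd (ve i) ζ) p = χ p.1 *
        (g'' * dd (ve i) (fun p => s p.2) p ^ 2 +
          gp δ (s p.2) * dd (ve i) (dd (ve i) (fun p => s p.2)) p) := by
      intro i
      have h4 : dd (ve i) ζ =ᶠ[𝓝 p] fun q => χ q.1 * dd (ve i) G q := by
        filter_upwards [hQ.mem_nhds hp] with q hq
        rw [dd_congr _ (hζeq q hq)]
        have h4 : dd (ve i) ζ₁ q = _ :=
          dd_mul (p := q) (ve i) (hX.differentiable n0 q) (hG.differentiable n0 q)
        rw [h4, hXi]; ring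
      have h6 := dd2_comp isOpen_univ hSs.contDiffOn (ve i) p (mem_univ _) (gg_deriv δ) h1
      rw [dd_congr _ h4, dd_mul _ (hX.differentiable n0 p)
        (da isOpen_univ (dd_smooth isOpen_univ _ hG.contDiffOn) (mem_univ p)), hXi, zero_mul,
        zero_add, ← h6]
    refine ⟨g'' * ∑ i : Fin d, dd (ve i) (fun p => s p.2) p ^ 2 +
      gp δ (s p.2) * LL (fun p => s p.2) p, ?_, ?_, ?_⟩
    · have := hLs p.1 p.2 hp.2
      have a1 : 0 ≤ g'' * ∑ i : Fin d, dd (ve i) (fun p => s p.2) p ^ 2 :=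
        mul_nonneg h2 (Finset.sum_nonneg fun i _ => sq_nonneg _)
      have a2 := gp_nonneg δ (s p.2)
      have a3 := gp_le δ (s p.2)
      have a4 : -C ≤ LL (fun p => s p.2) p := this.1
      nlinarith
    · intro h
      rw [h3 h, zero_mul, zero_add]
      exact mul_nonpos_of_nonneg_of_nonpos (gp_nonneg _ _) (hLs p.1 p.2 hp.2).2
    · unfold LL
      rw [Finset.sum_congr rfl fun i _ => hLi i, ← Finset.mul_sum, Finset.sum_add_distrib,
        ← Finset.mul_sum, ← Finset.mul_sum]
  -- main pointwise bound
  have hpt : ∀ p, max (f p) 0 * dd (vt d) ζ p + max (φ p) 0 * LL ζ p ≤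
      ((ε * dd (vt d) ζ p + ε * LL ζ p) + Q.indicator (fun _ => ε * (M + C * T)) p) -
        N.indicator (fun _ => c ^ 2) p := by
    intro p
    by_cases hp : p ∈ Q
    · obtain ⟨θ', h1, h2, h3⟩ := e1 p hp
      obtain ⟨L, h4, h5, h6⟩ := e2 p hp
      rw [indicator_of_mem hp]
      have hG0 : 0 ≤ G p := gg_nonneg hδ _
      have hGM : G p ≤ M := (gg_le (hspos _ hp.2).le).trans (hM _ hp.2)
      have hθ0 := gp_nonneg δ p.1
      have hθ1 := gp_le δ p.1
      have hk0 := gp_nonneg δ (T - p.1)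
      have hk1 := gp_le δ (T - p.1)
      have hh0 := gg_nonneg hδ (T - p.1)
      have hh1 : gg δ (T - p.1) ≤ T := (gg_le (by linarith [hp.1.2])).trans (by linarith [hp.1.1])
      have hf0 : 0 ≤ max (f p) 0 := le_max_right _ _
      have hφ0 : 0 ≤ max (φ p) 0 := le_max_right _ _
      have hχT : χ p.1 ≤ T := by
        have := mul_le_mul hθ1 hh1 hh0 zero_le_one
        simpa [χ] using this
      have hind : N.indicator (fun _ => c ^ 2) p ≤
          max (f p) 0 * (gp δ p.1 * gp δ (T - p.1) * G p) := by
        by_cases hpN : p ∈ N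
        · rw [indicator_of_mem hpN]
          obtain ⟨⟨_, b1⟩, b2, b3, b4⟩ := hpN
          rw [gp_one hδ (by linarith), gp_one hδ (by linarith)]
          have b5 : c ≤ max (f p) 0 := (le_of_lt b1).trans (le_max_left _ _)
          have b6 : c ≤ G p := le_trans (by linarith) (gg_ge hδ (by linarith))
          nlinarith
        · rw [indicator_of_notMem hpN]; positivity
      have A1 : max (f p) 0 * (θ' * gg δ (T - p.1) * G p) ≤ ε * (θ' * gg δ (T - p.1) * G p) := by
        by_cases ht : 2 * δ ≤ p.1
        · rw [h2 ht]; simp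
        · exact mul_le_mul_of_nonneg_right (max_le (hfε p hp (not_le.1 ht)) hε.le) (by positivity)
      have A2 : gp δ p.1 * gp δ (T - p.1) * G p ≤ M := by
        have : gp δ p.1 * gp δ (T - p.1) ≤ 1 := mul_le_one₀ hθ1 hk0 hk1
        exact (mul_le_of_le_one_left hG0 this).trans hGM
      have A3 : max (f p) 0 * dd (vt d) ζ p ≤ ε * dd (vt d) ζ p + ε * M -
          max (f p) 0 * (gp δ p.1 * gp δ (T - p.1) * G p) := by
        have := mul_le_mul_of_nonneg_left A2 hε.le
        rw [h3]
        linarith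
      have A4 : max (φ p) 0 * LL ζ p ≤ ε * LL ζ p + ε * (C * T) := by
        rw [h6]
        have hχ := hχ0 p.1
        have B1 : max (φ p) 0 * L ≤ ε * (L + C) := by
          by_cases hsδ : 2 * δ ≤ s p.2
          · have := mul_nonpos_of_nonneg_of_nonpos hφ0 (h5 hsδ)
            have : 0 ≤ ε * (L + C) := mul_nonneg hε.le (by linarith)
            linarith
          · have b1 : max (φ p) 0 ≤ ε := max_le (hφε p hp (not_le.1 hsδ)) hε.le
            have b2 := mul_le_mul_of_nonneg_right b1 (show 0 ≤ L + C by linarith)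
            have b3 := mul_nonneg hφ0 hC
            linarith
        have B2 := mul_le_mul_of_nonneg_left B1 hχ
        have B3 := mul_le_mul_of_nonneg_left hχT (mul_nonneg hε.le hC)
        linarith
      linarith
    · have hpK : p ∉ K := fun h => hp (hKQ h)
      have hpN : p ∉ N := fun h => hp (hNQ h)
      simp [dd_off hK.isClosed _ hζK p hpK, LL_off hK.isClosed hζK p hpK, hp, hpN]
  have i1 : Integrable (fun p => max (f p) 0 * dd (vt d) ζ p + max (φ p) 0 * LL ζ p) volume := by
    refine intg hQ hK hKQ ?_ ?_
    · exact ((hf.continuousOn.sup continuousOn_const).mul (dd_smooth hQ _ hζQ).continuousOn).add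
        ((hφ.continuousOn.sup continuousOn_const).mul (LL_smooth hQ hζQ).continuousOn)
    · intro p hp
      simp [dd_off hK.isClosed _ hζK p hp, LL_off hK.isClosed hζK p hp]
  have i2 : Integrable (fun p => ε * dd (vt d) ζ p + ε * LL ζ p) volume :=
    (hdt.1.const_mul ε).add (hLL.1.const_mul ε)
  have i3 : Integrable (Q.indicator (fun _ => ε * (M + C * T))) volume :=
    (integrable_indicator_iff hQ.measurableSet).2 (integrableOn_const hQfin)
  have i4 : Integrable (N.indicator (fun _ => c ^ 2)) volume :=
    (integrable_indicator_iff hNo.measurableSet).2 (integrableOn_const hNfin)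
  have fin := integral_mono i1 ((i2.add i3).sub i4) hpt
  have v1 : ∫ p, (((ε * dd (vt d) ζ p + ε * LL ζ p) + Q.indicator (fun _ => ε * (M + C * T)) p) -
        N.indicator (fun _ => c ^ 2) p) =
      (volume Q).toReal * (ε * (M + C * T)) - (volume N).toReal * c ^ 2 := by
    have i23 : Integrable (fun p => (ε * dd (vt d) ζ p + ε * LL ζ p) +
        Q.indicator (fun _ => ε * (M + C * T)) p) volume := i2.add i3
    rw [integral_sub i23 i4, integral_add i2 i3, integral_add (hdt.1.const_mul ε)
      (hLL.1.const_mul ε), integral_const_mul, integral_const_mul, hdt.2, hLL.2,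
      integral_indicator hQ.measurableSet, integral_indicator hNo.measurableSet,
      setIntegral_const, setIntegral_const]
    simp [Measure.real]
  have fin2 : 0 ≤ (volume Q).toReal * (ε * (M + C * T)) - (volume N).toReal * c ^ 2 := by
    rw [← v1]; exact kt.trans fin
  linarith

end comp

section app
variable {d : ℕ}

lemma dd_slice {F : ℝ × EuclideanSpace ℝ (Fin d) → ℝ} {t : ℝ} {y : EuclideanSpace ℝ (Fin d)}
    (e : EuclideanSpace ℝ (Fin d)) (hF : DifferentiableAt ℝ F (t, y)) :
    fderiv ℝ (fun y => F (t, y)) y e = dd (0, e) F (t, y) := by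
  have h := HasFDerivAt.comp y hF.hasFDerivAt (hasFDerivAt_prodMk_right (𝕜 := ℝ) t y)
  have h2 : (fun y => F (t, y)) = F ∘ (fun y => (t, y)) := rfl
  rw [h2, h.fderiv]
  simp [dd]

lemma dd_tslice {F : ℝ × EuclideanSpace ℝ (Fin d) → ℝ} {t : ℝ} {y : EuclideanSpace ℝ (Fin d)}
    (hF : DifferentiableAt ℝ F (t, y)) :
    deriv (fun s => F (s, y)) t = dd (vt d) F (t, y) := by
  have h := HasFDerivAt.comp t hF.hasFDerivAt (hasFDerivAt_prodMk_left (𝕜 := ℝ) t y)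
  have h2 : (fun s => F (s, y)) = F ∘ (fun s => (s, y)) := rfl
  rw [← fderiv_apply_one_eq_deriv, h2, h.fderiv]
  simp [dd, vt]

lemma dd2_slice {F : ℝ × EuclideanSpace ℝ (Fin d) → ℝ} {Q : Set (ℝ × EuclideanSpace ℝ (Fin d))}
    (hQ : IsOpen Q) (hF : ContDiffOn ℝ ∞ F Q) {t : ℝ} {x : EuclideanSpace ℝ (Fin d)}
    (hp : (t, x) ∈ Q) (e : EuclideanSpace ℝ (Fin d)) :
    fderiv ℝ (fun y => fderiv ℝ (fun y => F (t, y)) y e) x e = dd (0, e) (dd (0, e) F) (t, x) := by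
  rw [← dd_slice e (da hQ (dd_smooth hQ _ hF) hp)]
  have : (fun y => fderiv ℝ (fun y => F (t, y)) y e) =ᶠ[𝓝 x] fun y => dd (0, e) F (t, y) := by
    have hc : ContinuousAt (fun y : EuclideanSpace ℝ (Fin d) => (t, y)) x := by fun_prop
    filter_upwards [hc (hQ.mem_nhds hp)] with y hy
    exact dd_slice e (da hQ hF hy)
  rw [this.fderiv_eq]

lemma dd2_lap {F : ℝ × EuclideanSpace ℝ (Fin d) → ℝ} {Q : Set (ℝ × EuclideanSpace ℝ (Fin d))}
    (hQ : IsOpen Q) (hF : ContDiffOn ℝ ∞ F Q) {t : ℝ} {x : EuclideanSpace ℝ (Fin d)}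
    (hp : (t, x) ∈ Q) (e : EuclideanSpace ℝ (Fin d)) :
    iteratedFDeriv ℝ 2 (fun y => F (t, y)) x ![e, e] = dd (0, e) (dd (0, e) F) (t, x) := by
  rw [← dd2_slice hQ hF hp, iteratedFDeriv_two_apply]
  have hg : ContDiffAt ℝ ∞ (fun y => F (t, y)) x :=
    ContDiffAt.comp x (hF.contDiffAt (hQ.mem_nhds hp)) (by fun_prop)
  have hg2 : DifferentiableAt ℝ (fderiv ℝ (fun y => F (t, y))) x :=
    (hg.fderiv_right (m := ∞) (by simp)).differentiableAt (by simp)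
  rw [fderiv_clm_apply hg2 (by fun_prop)]
  simp

lemma LL_slice {F : ℝ × EuclideanSpace ℝ (Fin d) → ℝ} {Q : Set (ℝ × EuclideanSpace ℝ (Fin d))}
    (hQ : IsOpen Q) (hF : ContDiffOn ℝ ∞ F Q) {t : ℝ} {x : EuclideanSpace ℝ (Fin d)}
    (hp : (t, x) ∈ Q) : spaceLap (fun y => F (t, y)) x = LL F (t, x) := by
  unfold spaceLap LL
  exact Finset.sum_congr rfl fun i _ => dd2_slice hQ hF hp _

lemma LL_basis {F : ℝ × EuclideanSpace ℝ (Fin d) → ℝ} {Q : Set (ℝ × EuclideanSpace ℝ (Fin d))}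
    (hQ : IsOpen Q) (hF : ContDiffOn ℝ ∞ F Q) {t : ℝ} {x : EuclideanSpace ℝ (Fin d)}
    (hp : (t, x) ∈ Q) (b : OrthonormalBasis (Fin d) ℝ (EuclideanSpace ℝ (Fin d))) :
    ∑ i, dd (0, b i) (dd (0, b i) F) (t, x) = LL F (t, x) := by
  have h1 := congrFun (InnerProductSpace.laplacian_eq_iteratedFDeriv_orthonormalBasis
    (fun y => F (t, y)) b) x
  have h2 := congrFun (InnerProductSpace.laplacian_eq_iteratedFDeriv_orthonormalBasis
    (fun y => F (t, y)) (EuclideanSpace.basisFun (Fin d) ℝ)) x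
  rw [h1] at h2
  simp only [dd2_lap hQ hF hp, EuclideanSpace.basisFun_apply] at h2
  exact h2

/-- the affine reflection on space-time -/
noncomputable def sg (x₀ x₂ : EuclideanSpace ℝ (Fin d))
    (R : EuclideanSpace ℝ (Fin d) ≃ₗᵢ[ℝ] EuclideanSpace ℝ (Fin d))
    (p : ℝ × EuclideanSpace ℝ (Fin d)) : ℝ × EuclideanSpace ℝ (Fin d) :=
  (p.1, x₂ + R (p.2 - x₀))

lemma sg_smooth (x₀ x₂ : EuclideanSpace ℝ (Fin d))
    (R : EuclideanSpace ℝ (Fin d) ≃ₗᵢ[ℝ] EuclideanSpace ℝ (Fin d)) :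
    ContDiff ℝ ∞ (sg x₀ x₂ R) := by
  unfold sg
  have := R.contDiff (n := ∞)
  exact contDiff_fst.prodMk (contDiff_const.add (this.comp (contDiff_snd.sub contDiff_const)))

lemma dd_sg (x₀ x₂ : EuclideanSpace ℝ (Fin d))
    (R : EuclideanSpace ℝ (Fin d) ≃ₗᵢ[ℝ] EuclideanSpace ℝ (Fin d))
    {F : ℝ × EuclideanSpace ℝ (Fin d) → ℝ} {p : ℝ × EuclideanSpace ℝ (Fin d)}
    (hF : DifferentiableAt ℝ F (sg x₀ x₂ R p)) (v : ℝ × EuclideanSpace ℝ (Fin d)) :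
    dd v (fun q => F (sg x₀ x₂ R q)) p = dd (v.1, R v.2) F (sg x₀ x₂ R p) := by
  have hR : HasFDerivAt (fun q : ℝ × EuclideanSpace ℝ (Fin d) => x₂ + R (q.2 - x₀))
      ((R.toContinuousLinearEquiv : EuclideanSpace ℝ (Fin d) →L[ℝ] EuclideanSpace ℝ (Fin d)).comp
        (ContinuousLinearMap.snd ℝ ℝ (EuclideanSpace ℝ (Fin d)))) p := by
    have h1 : HasFDerivAt (fun q : ℝ × EuclideanSpace ℝ (Fin d) => q.2 - x₀)
      (ContinuousLinearMap.snd ℝ ℝ (EuclideanSpace ℝ (Fin d))) p := hasFDerivAt_snd.sub_const x₀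
    exact (HasFDerivAt.comp p (R.toContinuousLinearEquiv.hasFDerivAt) h1).const_add x₂
  have hA : HasFDerivAt (sg x₀ x₂ R) _ p := hasFDerivAt_fst.prodMk hR
  have h := HasFDerivAt.comp p hF.hasFDerivAt hA
  have h2 : (fun q => F (sg x₀ x₂ R q)) = F ∘ sg x₀ x₂ R := rfl
  unfold dd
  rw [h2, h.fderiv]
  simp

lemma LL_sg (x₀ x₂ : EuclideanSpace ℝ (Fin d))
    (R : EuclideanSpace ℝ (Fin d) ≃ₗᵢ[ℝ] EuclideanSpace ℝ (Fin d))
    {F : ℝ × EuclideanSpace ℝ (Fin d) → ℝ} {Q : Set (ℝ × EuclideanSpace ℝ (Fin d))}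
    (hQ : IsOpen Q) (hF : ContDiffOn ℝ ∞ F Q) {p : ℝ × EuclideanSpace ℝ (Fin d)}
    (hp : sg x₀ x₂ R p ∈ Q) :
    LL (fun q => F (sg x₀ x₂ R q)) p = LL F (sg x₀ x₂ R p) := by
  rw [← LL_basis hQ hF (t := (sg x₀ x₂ R p).1) (x := (sg x₀ x₂ R p).2) hp
    ((EuclideanSpace.basisFun (Fin d) ℝ).map R)]
  unfold LL
  refine Finset.sum_congr rfl fun i _ => ?_
  have h1 : dd (ve i) (fun q => F (sg x₀ x₂ R q)) =ᶠ[𝓝 p]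
      fun q => dd (0, R (EuclideanSpace.single i 1)) F (sg x₀ x₂ R q) := by
    filter_upwards [(sg_smooth x₀ x₂ R).continuous.continuousAt (hQ.mem_nhds hp)] with q hq
    exact dd_sg x₀ x₂ R (da hQ hF hq) (ve i)
  rw [dd_congr _ h1, dd_sg x₀ x₂ R (da hQ (dd_smooth hQ _ hF) hp)]
  simp [ve]

lemma LL_sub {F G : ℝ × EuclideanSpace ℝ (Fin d) → ℝ} {Q : Set (ℝ × EuclideanSpace ℝ (Fin d))}
    (hQ : IsOpen Q) (hF : ContDiffOn ℝ ∞ F Q) (hG : ContDiffOn ℝ ∞ G Q)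
    {p : ℝ × EuclideanSpace ℝ (Fin d)} (hp : p ∈ Q) :
    LL (fun q => F q - G q) p = LL F p - LL G p := by
  unfold LL
  rw [← Finset.sum_sub_distrib]
  refine Finset.sum_congr rfl fun i _ => ?_
  have h1 : dd (ve i) (fun q => F q - G q) =ᶠ[𝓝 p] fun q => dd (ve i) F q - dd (ve i) G q := by
    filter_upwards [hQ.mem_nhds hp] with q hq
    exact dd_sub _ (da hQ hF hq) (da hQ hG hq)
  rw [dd_congr _ h1, dd_sub _ (da hQ (dd_smooth hQ _ hF) hp) (da hQ (dd_smooth hQ _ hG) hp)]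

lemma dd_inner (x₀ w : EuclideanSpace ℝ (Fin d)) (c : ℝ) (v p : ℝ × EuclideanSpace ℝ (Fin d)) :
    dd v (fun q => inner ℝ (q.2 - x₀) w - c) p = inner ℝ v.2 w := by
  have h1 : HasFDerivAt (fun q : ℝ × EuclideanSpace ℝ (Fin d) => q.2 - x₀)
      (ContinuousLinearMap.snd ℝ ℝ (EuclideanSpace ℝ (Fin d))) p := hasFDerivAt_snd.sub_const x₀
  unfold dd
  rw [((h1.inner ℝ (hasFDerivAt_const w p)).sub_const c).fderiv]
  simp

lemma dd_nsq (x₀ : EuclideanSpace ℝ (Fin d)) (c : ℝ) (v p : ℝ × EuclideanSpace ℝ (Fin d)) :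
    dd v (fun q => c - ‖q.2 - x₀‖ ^ 2) p = - 2 * inner ℝ (p.2 - x₀) v.2 := by
  have h1 : HasFDerivAt (fun q : ℝ × EuclideanSpace ℝ (Fin d) => q.2 - x₀)
      (ContinuousLinearMap.snd ℝ ℝ (EuclideanSpace ℝ (Fin d))) p := hasFDerivAt_snd.sub_const x₀
  unfold dd
  rw [(h1.norm_sq.const_sub c).fderiv]
  simp [inner_sub_left]

lemma LL_s (x₀ n : EuclideanSpace ℝ (Fin d)) (a c : ℝ) (p : ℝ × EuclideanSpace ℝ (Fin d)) :
    LL (fun q => (a - ‖q.2 - x₀‖ ^ 2) * (inner ℝ (q.2 - x₀) n - c)) p =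
      - 2 * d * (inner ℝ (p.2 - x₀) n - c) - 4 * inner ℝ (p.2 - x₀) n := by
  have d1 : ∀ b : ℝ, ∀ w : EuclideanSpace ℝ (Fin d),
      Differentiable ℝ (fun q : ℝ × EuclideanSpace ℝ (Fin d) => inner ℝ (q.2 - x₀) w - b) := by
    intro b w
    exact ((differentiable_snd.sub_const x₀).inner ℝ (differentiable_const w)).sub_const b
  have d2 : Differentiable ℝ (fun q : ℝ × EuclideanSpace ℝ (Fin d) => a - ‖q.2 - x₀‖ ^ 2) :=
    ((differentiable_snd.sub_const x₀).norm_sq ℝ).const_sub a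
  have key : ∀ v : ℝ × EuclideanSpace ℝ (Fin d),
      dd v (dd v (fun q => (a - ‖q.2 - x₀‖ ^ 2) * (inner ℝ (q.2 - x₀) n - c))) p =
      - 2 * inner ℝ v.2 v.2 * (inner ℝ (p.2 - x₀) n - c)
        - 4 * (inner ℝ (p.2 - x₀) v.2 * inner ℝ v.2 n) := by
    intro v
    have e1 : dd v (fun q => (a - ‖q.2 - x₀‖ ^ 2) * (inner ℝ (q.2 - x₀) n - c)) =
        fun q => (-2 * (inner ℝ (q.2 - x₀) n - c)) * (inner ℝ (q.2 - x₀) v.2 - 0) -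
          (a - ‖q.2 - x₀‖ ^ 2) * (- inner ℝ v.2 n) := by
      funext q
      rw [dd_mul v (d2 q) (d1 c n q), dd_inner, dd_nsq]
      ring
    have d4 : DifferentiableAt ℝ (fun q : ℝ × EuclideanSpace ℝ (Fin d) =>
      -2 * (inner ℝ (q.2 - x₀) n - c)) p := ((d1 c n).const_mul _) p
    have d5 : DifferentiableAt ℝ (fun q : ℝ × EuclideanSpace ℝ (Fin d) =>
      (-2 * (inner ℝ (q.2 - x₀) n - c)) * (inner ℝ (q.2 - x₀) v.2 - 0)) p := d4.mul (d1 _ _ p)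
    have d6 : DifferentiableAt ℝ (fun q : ℝ × EuclideanSpace ℝ (Fin d) =>
      (a - ‖q.2 - x₀‖ ^ 2) * (- inner ℝ v.2 n)) p := (d2 p).mul (differentiableAt_const _)
    rw [e1, dd_sub v d5 d6, dd_mul v d4 (d1 _ _ p),
      dd_mul v (d2 p) (differentiableAt_const _),
      dd_mul v (F := fun _ => -2) (differentiableAt_const _) (d1 _ _ p), dd_inner, dd_inner, dd_nsq]
    have z : ∀ r : ℝ, dd v (fun _ : ℝ × EuclideanSpace ℝ (Fin d) => r) p = 0 := by
      intro r; simp [dd]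
    rw [z, z]
    ring
  unfold LL
  simp only [key]
  rw [Finset.sum_sub_distrib, ← Finset.mul_sum]
  congr 1
  · simp [ve]
    ring
  · congr 1
    simp [ve, PiLp.inner_apply]
    try exact Finset.sum_congr rfl fun i _ => by ring

end app

section main
variable {d : ℕ}

lemma first_claim (m : ℝ) (hm0 : 0 < m)
    (x₀ : EuclideanSpace ℝ (Fin d)) (R₀ lam T : ℝ) (hR₀ : 0 < R₀) (hlam : 2 < lam)
    (hT : 0 < T)
    (u : ℝ → EuclideanSpace ℝ (Fin d) → ℝ) (u₀ : EuclideanSpace ℝ (Fin d) → ℝ)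
    (hsupp : Function.support u₀ ⊆ closedBall x₀ R₀)
    (hsol : IsDirichletSol m x₀ (lam * R₀) T u u₀) :
    ∀ t ∈ Ioo (0 : ℝ) T, ∀ x₂ ∈ ball x₀ (lam * R₀) \ ball x₀ (2 * R₀), u t x₂ ≤ u t x₀ := by
  obtain ⟨hnn, hcont, ⟨hpos, hsm, hpde⟩, hini, hbdy, -, -⟩ := hsol
  intro t₀ ht₀ x₂ hx₂
  set ρ := lam * R₀ with hρ
  have hρ0 : 0 < ρ := by positivity
  obtain ⟨n, hn⟩ : ∃ n, n = x₂ - x₀ := ⟨_, rfl⟩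
  have hn1 : 2 * R₀ ≤ ‖n‖ := by
    have := hx₂.2; rw [mem_ball, dist_eq_norm, ← hn] at this; linarith
  have hn2 : ‖n‖ < ρ := by
    have := hx₂.1; rwa [mem_ball, dist_eq_norm, ← hn] at this
  have hn0 : 0 < ‖n‖ := by linarith
  -- boundary values at time zero
  have hbdy0 : ∀ t ∈ Icc 0 T, ∀ x ∈ sphere x₀ ρ, u t x = 0 := by
    intro t ht x hx
    rcases ht.1.lt_or_eq with h | h
    · exact hbdy t ⟨h, ht.2⟩ x hx
    · rw [← h]
      have hc : ContinuousOn (fun t => u t x) (Icc 0 T) :=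
        hcont.comp (f := fun t : ℝ => (t, x)) (by fun_prop)
          (fun s hs => ⟨hs, sphere_subset_closedBall hx⟩)
      have h1 : Filter.Tendsto (fun t => u t x) (𝓝[Ioc 0 T] 0) (𝓝 (u 0 x)) :=
        (hc 0 ⟨le_rfl, hT.le⟩).mono Ioc_subset_Icc_self
      have h2 : Filter.Tendsto (fun t => u t x) (𝓝[Ioc 0 T] 0) (𝓝 0) := by
        refine tendsto_const_nhds.congr' ?_
        filter_upwards [self_mem_nhdsWithin] with s hs using (hbdy s hs x hx).symm
      have : (𝓝[Ioc 0 T] (0:ℝ)).NeBot := left_nhdsWithin_Ioc_neBot hT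
      exact tendsto_nhds_unique h1 h2
  -- reflection
  let R := (Submodule.span ℝ {n})ᗮ.reflection
  have hRy : ∀ y, R y = y - (2 * inner ℝ y n / ‖n‖ ^ 2) • n := by
    intro y
    simp only [R]
    rw [Submodule.reflection_orthogonal_apply, Submodule.reflection_singleton_apply,
      real_inner_comm]
    simp only [RCLike.ofReal_real_eq_id, id, neg_sub, two_smul, ← add_smul]
    congr 2
    ring
  have hRn : ∀ y, inner ℝ (R y) n = - inner ℝ y n := by
    intro y
    rw [hRy, inner_sub_left, inner_smul_left, real_inner_self_eq_norm_sq]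
    simp only [conj_trivial]
    field_simp
    ring
  let l : EuclideanSpace ℝ (Fin d) → ℝ := fun x => inner ℝ (x - x₀) n - ‖n‖ ^ 2 / 2
  let σ : EuclideanSpace ℝ (Fin d) → EuclideanSpace ℝ (Fin d) := fun x => x₂ + R (x - x₀)
  have hsg : ∀ p, sg x₀ x₂ R p = (p.1, σ p.2) := fun p => rfl
  have hσn : ∀ x, ‖σ x - x₀‖ ^ 2 = ‖x - x₀‖ ^ 2 - 2 * l x := by
    intro x
    have e : σ x - x₀ = n + R (x - x₀) := by simp only [σ, hn]; abel
    rw [e, norm_add_sq_real, real_inner_comm, hRn, R.norm_map]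
    simp only [l]; ring
  have hσ0 : ∀ x, l x = 0 → σ x = x := by
    intro x hx
    have e : inner ℝ (x - x₀) n = ‖n‖ ^ 2 / 2 := by simp only [l] at hx; linarith
    simp only [σ]
    rw [hRy, e]
    have : 2 * (‖n‖ ^ 2 / 2) / ‖n‖ ^ 2 = 1 := by field_simp
    rw [this, one_smul, hn]; abel
  have hσ2 : σ x₂ = x₀ := by
    simp only [σ]
    rw [← hn, hRy, real_inner_self_eq_norm_sq]
    have : 2 * ‖n‖ ^ 2 / ‖n‖ ^ 2 = 2 := by field_simp
    rw [this, two_smul, hn]; abel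
  have hlc : Continuous l := by
    simp only [l]; fun_prop
  have hσc : Continuous σ := by
    have := R.continuous
    simp only [σ]; fun_prop
  let D : Set (EuclideanSpace ℝ (Fin d)) := ball x₀ ρ ∩ {x | 0 < l x}
  let Kb : Set (EuclideanSpace ℝ (Fin d)) := closedBall x₀ ρ ∩ {x | 0 ≤ l x}
  have hD : IsOpen D := isOpen_ball.inter (isOpen_lt continuous_const hlc)
  have hKb : IsCompact Kb := (isCompact_closedBall x₀ ρ).inter_right
    (isClosed_le continuous_const hlc)
  have hDK : D ⊆ Kb := fun x hx => ⟨ball_subset_closedBall hx.1, (show 0 < l x from hx.2).le⟩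
  have hKD : ∀ x ∈ Kb, x ∉ D → x ∈ sphere x₀ ρ ∨ l x = 0 := by
    intro x hx hxD
    rcases (show dist x x₀ ≤ ρ from hx.1).lt_or_eq with h | h
    · right
      rcases (show 0 ≤ l x from hx.2).lt_or_eq with h' | h'
      · exact absurd ⟨h, h'⟩ hxD
      · exact h'.symm
    · left; exact h
  have hσD : ∀ x ∈ D, σ x ∈ ball x₀ ρ := by
    intro x hx
    have h1 := hσn x
    have h2 : ‖x - x₀‖ < ρ := by rw [← dist_eq_norm]; exact hx.1
    have h3 : 0 < l x := hx.2
    rw [mem_ball, dist_eq_norm]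
    refine lt_of_pow_lt_pow_left₀ 2 hρ0.le ?_
    have := pow_lt_pow_left₀ h2 (norm_nonneg _) two_ne_zero
    linarith
  have hσK : ∀ x ∈ Kb, σ x ∈ closedBall x₀ ρ := by
    intro x hx
    have h1 := hσn x
    have h2 : ‖x - x₀‖ ≤ ρ := by rw [← dist_eq_norm]; exact hx.1
    have h3 : 0 ≤ l x := hx.2
    rw [mem_closedBall, dist_eq_norm]
    refine le_of_sq_le_sq ?_ hρ0.le
    have := pow_le_pow_left₀ (norm_nonneg _) h2 2
    linarith
  -- s
  let s : EuclideanSpace ℝ (Fin d) → ℝ := fun x =>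
    (ρ ^ 2 - ‖x - x₀‖ ^ 2) * (inner ℝ (x - x₀) n - ‖n‖ ^ 2 / 2)
  have hs : ContDiff ℝ ∞ s := by
    have h1 : ContDiff ℝ ∞ (fun x : EuclideanSpace ℝ (Fin d) => x - x₀) :=
      contDiff_id.sub contDiff_const
    exact (contDiff_const.sub (h1.norm_sq ℝ)).mul ((h1.inner ℝ contDiff_const).sub contDiff_const)
  have hCS : ∀ x ∈ D, inner ℝ (x - x₀) n ≤ ρ * ‖n‖ := by
    intro x hx
    have h2 : ‖x - x₀‖ < ρ := by rw [← dist_eq_norm]; exact hx.1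
    exact (real_inner_le_norm _ _).trans (mul_le_mul_of_nonneg_right h2.le (norm_nonneg _))
  have hin : ∀ x ∈ D, 0 < inner ℝ (x - x₀) n := by
    intro x hx
    have h3 : 0 < inner ℝ (x - x₀) n - ‖n‖ ^ 2 / 2 := hx.2
    have : 0 < ‖n‖ ^ 2 / 2 := by positivity
    linarith
  have hball : ∀ x ∈ D, ‖x - x₀‖ ^ 2 < ρ ^ 2 := by
    intro x hx
    have h2 : ‖x - x₀‖ < ρ := by rw [← dist_eq_norm]; exact hx.1
    exact pow_lt_pow_left₀ h2 (norm_nonneg _) two_ne_zero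
  -- smoothness
  let U : ℝ × EuclideanSpace ℝ (Fin d) → ℝ := fun p => u p.1 p.2
  let V : ℝ × EuclideanSpace ℝ (Fin d) → ℝ := fun p => u p.1 p.2 ^ m
  let Q' : Set (ℝ × EuclideanSpace ℝ (Fin d)) := Ioo 0 T ×ˢ ball x₀ ρ
  let Q : Set (ℝ × EuclideanSpace ℝ (Fin d)) := Ioo 0 T ×ˢ D
  have hQ' : IsOpen Q' := isOpen_Ioo.prod isOpen_ball
  have hQ : IsOpen Q := isOpen_Ioo.prod hD
  have hQQ : Q ⊆ Q' := prod_mono le_rfl inter_subset_left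
  have hsgQ : ∀ p ∈ Q, sg x₀ x₂ R p ∈ Q' := fun p hp => ⟨hp.1, hσD _ hp.2⟩
  have hU : ContDiffOn ℝ ∞ U Q' := hsm
  have hV : ContDiffOn ℝ ∞ V Q' := hU.rpow_const_of_ne fun p hp => (hpos p hp).ne'
  have hUσ : ContDiffOn ℝ ∞ (fun p => U (sg x₀ x₂ R p)) Q :=
    hU.comp (sg_smooth x₀ x₂ R).contDiffOn hsgQ
  have hVσ : ContDiffOn ℝ ∞ (fun p => V (sg x₀ x₂ R p)) Q :=
    hV.comp (sg_smooth x₀ x₂ R).contDiffOn hsgQ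
  have hUc : ContinuousOn U (Icc 0 T ×ˢ closedBall x₀ ρ) := hcont
  have hVc : ContinuousOn V (Icc 0 T ×ˢ closedBall x₀ ρ) :=
    hcont.rpow_const fun p hp => Or.inr hm0.le
  have hsgK : ∀ p ∈ Icc 0 T ×ˢ Kb, sg x₀ x₂ R p ∈ Icc 0 T ×ˢ closedBall x₀ ρ :=
    fun p hp => ⟨hp.1, hσK _ hp.2⟩
  have hKK : Icc 0 T ×ˢ Kb ⊆ Icc 0 T ×ˢ closedBall x₀ ρ := prod_mono le_rfl inter_subset_left
  have heq0 : ∀ p ∈ Q', dd (vt d) U p = LL V p := by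
    rintro ⟨t, x⟩ hp
    have h1 := hpde (t, x) hp
    rw [← dd_tslice (da hQ' hU hp), ← LL_slice hQ' hV hp]
    exact h1
  have hcmp := comparison (T := T) hD hKb hDK hs (C := 2 * d * (ρ * ‖n‖) + 4 * (ρ * ‖n‖))
    (M := ρ ^ 2 * (ρ * ‖n‖))
    (fun x hx => mul_pos (by linarith [hball x hx]) hx.2)
    (fun x hx hxD => by
      rcases hKD x hx hxD with h | h
      · have h2 : ‖x - x₀‖ = ρ := by rw [← dist_eq_norm]; exact h
        simp [s, h2]
      · have h2 : inner ℝ (x - x₀) n - ‖n‖ ^ 2 / 2 = 0 := h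
        simp [s, h2])
    (by positivity)
    (fun x hx => by
      have h1 := hball x hx
      have h2 := hCS x hx
      have h3 : 0 < inner ℝ (x - x₀) n - ‖n‖ ^ 2 / 2 := hx.2
      have h4 : 0 ≤ ‖n‖ ^ 2 / 2 := by positivity
      have h5 : 0 ≤ ‖x - x₀‖ ^ 2 := by positivity
      exact mul_le_mul (by linarith) (by linarith) h3.le (by positivity))
    (fun t x hx => by
      have h := LL_s x₀ n (ρ ^ 2) (‖n‖ ^ 2 / 2) (t, x)
      have h2 := hCS x hx
      have h3 : 0 < inner ℝ (x - x₀) n - ‖n‖ ^ 2 / 2 := hx.2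
      have h4 : 0 ≤ ‖n‖ ^ 2 / 2 := by positivity
      have h6 := hin x hx
      have hd0 : (0:ℝ) ≤ 2 * d := by positivity
      simp only [s]
      rw [h]
      simp only
      have h7 := mul_nonneg hd0 h3.le
      have h8 := mul_le_mul_of_nonneg_left
        (show inner ℝ (x - x₀) n - ‖n‖ ^ 2 / 2 ≤ ρ * ‖n‖ by linarith) hd0
      constructor <;> linarith)
    (f := fun p => U p - U (sg x₀ x₂ R p)) (φ := fun p => V p - V (sg x₀ x₂ R p))
    ((hUc.mono hKK).sub (hUc.comp (sg_smooth x₀ x₂ R).continuous.continuousOn hsgK))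
    ((hVc.mono hKK).sub (hVc.comp (sg_smooth x₀ x₂ R).continuous.continuousOn hsgK))
    ((hU.mono hQQ).sub hUσ) ((hV.mono hQQ).sub hVσ)
    (fun p hp => by
      rw [dd_sub _ (da hQ' hU (hQQ hp)) (da hQ hUσ hp), LL_sub hQ (hV.mono hQQ) hVσ hp,
        LL_sg x₀ x₂ R hQ' hV (hsgQ p hp), dd_sg x₀ x₂ R (da hQ' hU (hsgQ p hp)),
        heq0 p (hQQ hp), ← heq0 _ (hsgQ p hp)]
      simp [vt])
    (fun p hp => by
      have a1 : 0 < U p := hpos p (hQQ hp)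
      have a2 : 0 < U (sg x₀ x₂ R p) := hpos _ (hsgQ p hp)
      have b1 := Real.rpow_lt_rpow_iff a1.le a2.le hm0
      have b2 := Real.rpow_lt_rpow_iff a2.le a1.le hm0
      simp only [sub_pos, sub_neg]
      exact ⟨b2.symm, b1.symm⟩)
    (fun x hx => by
      have h0 : 0 ≤ u 0 (σ x) := hnn 0 ⟨le_rfl, hT.le⟩ _ (hσK x hx)
      change u 0 x - u 0 (σ x) ≤ 0
      by_cases hl : l x = 0
      · rw [hσ0 x hl, sub_self]
      have hlp : 0 < l x := lt_of_le_of_ne hx.2 (Ne.symm hl)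
      suffices u 0 x = 0 by linarith
      rcases (show dist x x₀ ≤ ρ from hx.1).lt_or_eq with h | h
      · rw [hini x h]
        by_contra hne
        have h1 := hsupp (Function.mem_support.2 hne)
        rw [mem_closedBall, dist_eq_norm] at h1
        have h2 := real_inner_le_norm (x - x₀) n
        have h3 : ‖x - x₀‖ * ‖n‖ ≤ (‖n‖ / 2) * ‖n‖ :=
          mul_le_mul_of_nonneg_right (by linarith) hn0.le
        simp only [l] at hlp
        nlinarith
      · exact hbdy0 0 ⟨le_rfl, hT.le⟩ x h)
    (fun t ht x hx hxD => by
      change u t x ^ m - u t (σ x) ^ m ≤ 0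
      rcases hKD x hx hxD with h | h
      · rw [hbdy0 t ht x h, Real.zero_rpow hm0.ne']
        have := Real.rpow_nonneg (hnn t ht _ (hσK x hx)) m
        linarith
      · rw [hσ0 x h, sub_self])
  have hx2D : x₂ ∈ D := by
    refine ⟨hx₂.1, ?_⟩
    change 0 < inner ℝ (x₂ - x₀) n - ‖n‖ ^ 2 / 2
    rw [← hn, real_inner_self_eq_norm_sq]
    have : 0 < ‖n‖ ^ 2 := by positivity
    linarith
  have := hcmp (t₀, x₂) ⟨ht₀, hx2D⟩
  change u t₀ x₂ - u t₀ (σ x₂) ≤ 0 at this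
  rw [hσ2] at this
  linarith

end main

end AR

/-- **Proposition A.1: local Aleksandrov reflection principle.** -/
theorem aleksandrov_reflection
    (d : ℕ) (hd : 1 ≤ d) (m : ℝ) (hm0 : 0 < m) (hm1 : m < 1)
    (x₀ : EuclideanSpace ℝ (Fin d)) (R₀ lam T : ℝ) (hR₀ : 0 < R₀) (hlam : 2 < lam)
    (hT : 0 < T)
    (u : ℝ → EuclideanSpace ℝ (Fin d) → ℝ) (u₀ : EuclideanSpace ℝ (Fin d) → ℝ)
    (h₀ : ∀ x, 0 ≤ u₀ x)
    (hsupp : Function.support u₀ ⊆ closedBall x₀ R₀)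
    (hsol : IsDirichletSol m x₀ (lam * R₀) T u u₀) :
    (∀ t ∈ Ioo (0 : ℝ) T, ∀ x₂ ∈ ball x₀ (lam * R₀) \ ball x₀ (2 * R₀),
      u t x₂ ≤ u t x₀) ∧
    ∀ t ∈ Ioo (0 : ℝ) T,
      (volume (ball x₀ (lam * R₀) \ ball x₀ (2 * R₀))).toReal⁻¹ *
        ∫ x in ball x₀ (lam * R₀) \ ball x₀ (2 * R₀), u t x ≤ u t x₀ := by
  have h1 := AR.first_claim m hm0 x₀ R₀ lam T hR₀ hlam hT u u₀ hsupp hsol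
  refine ⟨h1, ?_⟩
  intro t ht
  obtain ⟨hnn, hcont, -⟩ := hsol
  have hρ : 0 ≤ lam * R₀ := by nlinarith
  have hnn0 : 0 ≤ u t x₀ := hnn t (Ioo_subset_Icc_self ht) x₀ (mem_closedBall_self hρ)
  set A := ball x₀ (lam * R₀) \ ball x₀ (2 * R₀) with hA
  have hAm : MeasurableSet A := measurableSet_ball.diff measurableSet_ball
  have hAK : A ⊆ closedBall x₀ (lam * R₀) := sdiff_subset.trans ball_subset_closedBall
  have hfin : volume A ≠ ⊤ :=
    ((measure_mono hAK).trans_lt (isCompact_closedBall _ _).measure_lt_top).ne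
  have hc : ContinuousOn (fun x => u t x) (closedBall x₀ (lam * R₀)) :=
    hcont.comp (f := fun x => (t, x)) (by fun_prop)
      (fun x hx => ⟨Ioo_subset_Icc_self ht, hx⟩)
  have hint : IntegrableOn (fun x => u t x) A volume :=
    (hc.integrableOn_compact (isCompact_closedBall _ _)).mono_set hAK
  have h2 : ∫ x in A, u t x ≤ ∫ x in A, u t x₀ :=
    setIntegral_mono_on hint (integrableOn_const hfin) hAm (fun x hx => h1 t ht x hx)
  rw [setIntegral_const, smul_eq_mul, Measure.real] at h2
  rcases (ENNReal.toReal_nonneg (a := volume A)).eq_or_lt with h | h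
  · rw [← h]; simpa using hnn0
  · rw [inv_mul_le_iff₀ h]; exact h2
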